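/- Let f : ℝⁿ → ℝⁿ, let b ∈ ℝⁿ, let Ψ : ℝⁿ → ℝⁿ be differentiable with DΨ(x)·f(x) = b for all x (a straightening map for f), and let A : ℝ → Matrix (Fin n) (Fin n) ℝ be differentiable with A(t) invertible for every t. If z : ℝ → ℝⁿ is differentiable with z'(t) = f*(t, z(t)) for all t, where f* is the gauge transform of f by A, then y(t) := A(t)·Ψ(A(t)⁻¹·z(t)) satisfies the nonautonomous linear inhomogeneous equation y'(t) = A'(t)·A(t)⁻¹·y(t) + A(t)·b for all t. -/

import Mathlib

open Matrix

theorem gts_mulVec {n : ℕ} {A : ℝ → Matrix (Fin n) (Fin n) ℝ} {A' : Matrix (Fin n) (Fin n) ℝ}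
    {x : ℝ → Fin n → ℝ} {x' : Fin n → ℝ} {t : ℝ}
    (hA : ∀ i j, HasDerivAt (fun s => A s i j) (A' i j) t) (hx : HasDerivAt x x' t) :
    HasDerivAt (fun s => (A s).mulVec (x s)) (A'.mulVec (x t) + (A t).mulVec x') t := by
  rw [hasDerivAt_pi] at hx ⊢
  intro i
  have h := HasDerivAt.fun_sum (u := Finset.univ) (fun j _ => (hA i j).mul (hx j))
  simpa [Matrix.mulVec, dotProduct, Finset.sum_add_distrib] using h

theorem gts_det {n : ℕ} {A : ℝ → Matrix (Fin n) (Fin n) ℝ} {t : ℝ}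
    (hA : ∀ i j, DifferentiableAt ℝ (fun s => A s i j) t) :
    DifferentiableAt ℝ (fun s => (A s).det) t := by
  simp only [Matrix.det_apply']
  refine DifferentiableAt.fun_sum fun σ _ => DifferentiableAt.const_mul ?_ _
  exact DifferentiableAt.fun_finsetProd fun i _ => hA _ _

theorem gts_inv {n : ℕ} {A : ℝ → Matrix (Fin n) (Fin n) ℝ} {t : ℝ}
    (hA : ∀ i j, DifferentiableAt ℝ (fun s => A s i j) t) (hu : IsUnit (A t)) (i j : Fin n) :
    DifferentiableAt ℝ (fun s => (A s)⁻¹ i j) t := by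
  have hd : (A t).det ≠ 0 := ((Matrix.isUnit_iff_isUnit_det _).1 hu).ne_zero
  simp only [Matrix.inv_def, Ring.inverse_eq_inv', Matrix.smul_apply, smul_eq_mul,
    Matrix.adjugate_apply]
  refine ((gts_det hA).inv hd).mul (gts_det fun k l => ?_)
  by_cases h : k = j
  · subst h
    simp
  · simpa [Matrix.updateRow_ne h] using hA k l

/-- **Straightening transfers to gauge transforms.**
If `Ψ` straightens `ẋ = f(x)` to the constant equation `ẋ = b` (i.e. `DΨ(x)·f(x) = b` for all
`x`) and `z` solves the gauge transform `f*` of `f` by `A(t)`, then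
`y(t) := A(t)·Ψ(A(t)⁻¹·z(t))` solves the nonautonomous linear inhomogeneous equation
`ẏ = A'(t)·A(t)⁻¹·y + A(t)·b`. -/
theorem gauge_transform_straightening {n : ℕ}
    (f : (Fin n → ℝ) → (Fin n → ℝ)) (b : Fin n → ℝ)
    (Ψ : (Fin n → ℝ) → (Fin n → ℝ))
    (Ψ' : (Fin n → ℝ) → ((Fin n → ℝ) →L[ℝ] (Fin n → ℝ)))
    (hΨ : ∀ x, HasFDerivAt Ψ (Ψ' x) x)
    (hstraight : ∀ x, Ψ' x (f x) = b)
    (A A' : ℝ → Matrix (Fin n) (Fin n) ℝ)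
    (hA : ∀ t, ∀ i j, HasDerivAt (fun s => A s i j) (A' t i j) t)
    (hAinv : ∀ t, IsUnit (A t))
    (z : ℝ → Fin n → ℝ)
    (hz : ∀ t, HasDerivAt z
      ((A' t).mulVec ((A t)⁻¹.mulVec (z t)) +
        (A t).mulVec (f ((A t)⁻¹.mulVec (z t)))) t) :
    ∀ t, HasDerivAt (fun s => (A s).mulVec (Ψ ((A s)⁻¹.mulVec (z s))))
      ((A' t).mulVec ((A t)⁻¹.mulVec ((A t).mulVec (Ψ ((A t)⁻¹.mulVec (z t))))) +
        (A t).mulVec b) t := by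
  intro t
  have hx : DifferentiableAt ℝ (fun s => (A s)⁻¹.mulVec (z s)) t :=
    (gts_mulVec (A' := Matrix.of fun i j => deriv (fun s => (A s)⁻¹ i j) t)
      (fun i j => (gts_inv (fun i j => (hA t i j).differentiableAt) (hAinv t) i j).hasDerivAt)
      (hz t)).differentiableAt
  have hx' := hx.hasDerivAt
  have hdet : ∀ s, IsUnit (A s).det := fun s => (Matrix.isUnit_iff_isUnit_det _).1 (hAinv s)
  have h1 := gts_mulVec (hA t) hx'
  have hzeq : (fun s => (A s).mulVec ((A s)⁻¹.mulVec (z s))) = z := by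
    funext s
    rw [Matrix.mulVec_mulVec, Matrix.mul_nonsing_inv _ (hdet s), Matrix.one_mulVec]
  rw [hzeq] at h1
  have h2 := add_left_cancel (h1.unique (hz t))
  have h3 := Matrix.mulVec_injective_of_isUnit (hAinv t) h2
  rw [h3] at hx'
  have h4 := (hΨ ((A t)⁻¹.mulVec (z t))).comp_hasDerivAt t hx'
  rw [hstraight] at h4
  have h5 := gts_mulVec (hA t) h4
  rw [Matrix.mulVec_mulVec _ (A t)⁻¹ (A t), Matrix.nonsing_inv_mul _ (hdet t), Matrix.one_mulVec]
  exact h5
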